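/- Let q be odd, let C ≤ F_q^{2n} be a self-dual code, and let E ≤ C be a subspace of dimension n−1. Then the number of self-dual codes D ≤ F_q^{2n} with E ≤ D is exactly 2. -/

import Mathlib

noncomputable section

namespace KneserHeckeCodes

open Finset

variable {F : Type} [Field F] [Fintype F]

/-- The all-ones vector. -/
def allOnes (F : Type) [One F] (N : ℕ) : Fin N → F := fun _ => 1

/-- The dual code with respect to the (bilinear or Hermitian) form
`b(x,y) = ∑ i, x i * f (y i)`. -/
def dualCode {N : ℕ} (f : F → F) (C : Submodule F (Fin N → F)) : Submodule F (Fin N → F) where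
  carrier := {v | ∀ c ∈ C, ∑ i, v i * f (c i) = 0}
  add_mem' := by
    intro a b ha hb c hc
    have h1 := ha c hc
    have h2 := hb c hc
    change ∑ i, a i * f (c i) = 0 at h1
    change ∑ i, b i * f (c i) = 0 at h2
    change ∑ i, (a + b) i * f (c i) = 0
    simp [Pi.add_apply, add_mul, Finset.sum_add_distrib, h1, h2]
  zero_mem' := by
    intro c hc
    simp
  smul_mem' := by
    intro r a ha c hc
    have h := ha c hc
    change ∑ i, a i * f (c i) = 0 at h
    change ∑ i, (r • a) i * f (c i) = 0
    simp [Pi.smul_apply, smul_eq_mul, mul_assoc, ← Finset.mul_sum, h]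

/-- Action of a coordinate permutation on a code. -/
def permCode {N : ℕ} (π : Equiv.Perm (Fin N)) (C : Submodule F (Fin N → F)) :
    Submodule F (Fin N → F) :=
  C.map (LinearMap.funLeft F F π)

/-- Permutation equivalence of codes. -/
def equivCode {N : ℕ} (C D : Submodule F (Fin N → F)) : Prop :=
  ∃ π : Equiv.Perm (Fin N), permCode π C = D

/-- The order of the automorphism group of a code. -/
def autCard {N : ℕ} (C : Submodule F (Fin N → F)) : ℕ :=
  Nat.card {π : Equiv.Perm (Fin N) // permCode π C = C}

/-- `mon c v` is the number of columns of the `m × N` matrix with rows `c` equal to `v`. -/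
def mon {m N : ℕ} (c : Fin m → (Fin N → F)) (v : Fin m → F) : ℕ :=
  Nat.card {i : Fin N // ∀ j, c j i = v j}

/-- `aX X C` is the number of `m`-tuples of codewords of `C` with monomial `X`. -/
def aX {m N : ℕ} (X : (Fin m → F) → ℕ) (C : Submodule F (Fin N → F)) : ℕ :=
  Nat.card {c : Fin m → (Fin N → F) // (∀ j, c j ∈ C) ∧ mon c = X}

/-- The set `M_m` of monomials of degree `N` in genus `m`. -/
def MmSet (F : Type) [Fintype F] (m N : ℕ) : Set ((Fin m → F) → ℕ) :=
  {X | ∑ v, X v = N}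

/-- The rank of a monomial. -/
def rkX (F : Type) [Field F] {m : ℕ} (X : (Fin m → F) → ℕ) : ℕ :=
  Module.finrank F (Submodule.span F {v : Fin m → F | 0 < X v})

/-- The set `M*_m` of monomials of degree `N` and full rank `m`. -/
def MstarSet (F : Type) [Field F] [Fintype F] (m N : ℕ) : Set ((Fin m → F) → ℕ) :=
  {X | X ∈ MmSet F m N ∧ rkX F X = m}

instance finiteSubmodule {N : ℕ} : Finite (Submodule F (Fin N → F)) :=
  Finite.of_injective (fun C => (C : Set (Fin N → F))) SetLike.coe_injective

/-- The set of equivalence classes of codes in the family `𝓕`. -/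
abbrev ClassesB {N : ℕ} (𝓕 : Set (Submodule F (Fin N → F))) : Type :=
  Quot (fun C D : 𝓕 => equivCode C.1 D.1)

/-- The equivalence class of a code. -/
def clsOf {N : ℕ} {𝓕 : Set (Submodule F (Fin N → F))} (C : 𝓕) : ClassesB 𝓕 :=
  Quot.mk _ C

/-- A representative of an equivalence class. -/
def repB {N : ℕ} {𝓕 : Set (Submodule F (Fin N → F))} (b : ClassesB 𝓕) : 𝓕 :=
  Quot.out b

/-- The Hermitian inner product on `V` with `([C],[D]) = |Aut C| δ_{[C],[D]}`. -/
def innerV {N : ℕ} (𝓕 : Set (Submodule F (Fin N → F))) (v w : ClassesB 𝓕 → ℂ) : ℂ :=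
  letI : Fintype (ClassesB 𝓕) := Fintype.ofFinite _
  ∑ b : ClassesB 𝓕, (starRingEnd ℂ) (v b) * w b * (autCard (repB b).1 : ℂ)

/-- The `k`-th Kneser-Hecke operator `T_k` on `V`, where `n` is the dimension of the codes:
`T_k [C] = ∑_{D ∈ 𝓕, dim (C ⊓ D) = n - k} [D]`. -/
def heckeT {N : ℕ} (𝓕 : Set (Submodule F (Fin N → F))) (n k : ℕ)
    (v : ClassesB 𝓕 → ℂ) : ClassesB 𝓕 → ℂ :=
  letI : Fintype (ClassesB 𝓕) := Fintype.ofFinite _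
  fun b' => ∑ b : ClassesB 𝓕, v b *
    (Nat.card {D : 𝓕 // Module.finrank F ↥((repB b).1 ⊓ D.1) + k = n ∧ clsOf D = b'} : ℂ)

/-- The linear extension of `a_X` to `V`. -/
def aXc {N m : ℕ} (𝓕 : Set (Submodule F (Fin N → F))) (X : (Fin m → F) → ℕ)
    (v : ClassesB 𝓕 → ℂ) : ℂ :=
  letI : Fintype (ClassesB 𝓕) := Fintype.ofFinite _
  ∑ b : ClassesB 𝓕, v b * (aX X (repB b).1 : ℂ)

/-- `V_m`, the joint kernel of all `a_X`, `X ∈ M_m`. -/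
def VmSet {N : ℕ} (𝓕 : Set (Submodule F (Fin N → F))) (m : ℕ) : Set (ClassesB 𝓕 → ℂ) :=
  {v | ∀ X ∈ MmSet F m N, aXc 𝓕 X v = 0}

/-- `V_{m-1}` (with `V_{-1} = V`). -/
def VmPred {N : ℕ} (𝓕 : Set (Submodule F (Fin N → F))) (m : ℕ) : Set (ClassesB 𝓕 → ℂ) :=
  match m with
  | 0 => Set.univ
  | m + 1 => VmSet 𝓕 m

/-- `W_m = V_m^⊥`. -/
def WmSet {N : ℕ} (𝓕 : Set (Submodule F (Fin N → F))) (m : ℕ) : Set (ClassesB 𝓕 → ℂ) :=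
  {w | ∀ v ∈ VmSet 𝓕 m, innerV 𝓕 w v = 0}

/-- `Y_m = W_m ∩ V_{m-1}`. -/
def YmSet {N : ℕ} (𝓕 : Set (Submodule F (Fin N → F))) (m : ℕ) : Set (ClassesB 𝓕 → ℂ) :=
  WmSet 𝓕 m ∩ VmPred 𝓕 m

/-- `∑_{E ∈ E_C(c)} α_E`, counted as the number of pairs `(E, D)` with `E ≤ C` of
dimension `n-1` containing all entries of `c` and `D ∈ 𝓕` with `D ⊓ C = E`. -/
def pairCount {N : ℕ} (𝓕 : Set (Submodule F (Fin N → F))) (n : ℕ)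
    (C : Submodule F (Fin N → F)) {m : ℕ} (c : Fin m → (Fin N → F)) : ℕ :=
  Nat.card {ED : Submodule F (Fin N → F) × 𝓕 //
    ED.1 ≤ C ∧ Module.finrank F ↥ED.1 + 1 = n ∧ (∀ j, c j ∈ ED.1) ∧ ED.2.1 ⊓ C = ED.1}

/-- Condition ⋆ at level `m` for the subset `M⁰ ⊆ M*_m` with constant `α`. -/
def CondStar {N : ℕ} (𝓕 : Set (Submodule F (Fin N → F))) (n m : ℕ)
    (M0 : Set ((Fin m → F) → ℕ)) (α : ℕ) : Prop :=
  M0 ⊆ MstarSet F m N ∧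
  VmSet 𝓕 m = {v | v ∈ VmPred 𝓕 m ∧ ∀ X ∈ M0, aXc 𝓕 X v = 0} ∧
  ∀ C ∈ 𝓕, ∀ c : Fin m → (Fin N → F), (∀ j, c j ∈ C) → mon c ∈ M0 →
    pairCount 𝓕 n C c = α

/-- The genus-`m` complete weight enumerator. -/
def cwe {N : ℕ} (m : ℕ) (C : Submodule F (Fin N → F)) : MvPolynomial (Fin m → F) ℂ :=
  letI : Fintype C := Fintype.ofFinite _
  ∑ c : Fin m → C, MvPolynomial.monomial
    (Finsupp.equivFunOnFinite.symm (mon (fun j => (c j : Fin N → F)))) (1 : ℂ)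

end KneserHeckeCodes

open KneserHeckeCodes

/-!
Self-dual codes `D ≥ E` satisfy `D ≤ Eᗮ`, so they correspond to the isotropic lines of the
quotient `Eᗮ / E`, a nondegenerate plane that is hyperbolic because it contains the isotropic
line `C / E`.
Away from characteristic two a hyperbolic plane has exactly two isotropic lines.

For existence, a vector `x ∈ Eᗮ \ C` is moved along a vector `c ∈ C \ E` until it is isotropic.
For uniqueness, let `D` and `D'` be two self-dual spaces above `E` other than `C`. A vector
`y ∈ D` can be written `y = c + d` with `c ∈ C` and `d ∈ D'`; then `0 = b(y, y) = 2 b(c, d)`,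
and this orthogonality forces `c ∈ E` or `d ∈ C`, hence `y ∈ D'`.
-/

namespace KneserHeckeCodes

open LinearMap (BilinForm)
open Module (finrank)

section Submodule

variable {K V : Type*} [DivisionRing K] [AddCommGroup V] [Module K V] {C E : Submodule K V}

lemma span_singleton_sup_eq_of_wcovBy {c : V} (hEC : E ⩿ C) (hcC : c ∈ C) (hcE : c ∉ E) :
    Submodule.span K {c} ⊔ E = C := by
  have hle : Submodule.span K {c} ⊔ E ≤ C :=
    sup_le ((Submodule.span_singleton_le_iff_mem c C).2 hcC) hEC.le
  exact (hEC.eq_or_eq le_sup_right hle).resolve_left (Submodule.covBy_span_singleton_sup hcE).ne'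

lemma covBy_of_finrank_add_one_eq [FiniteDimensional K V] (hEC : E ≤ C)
    (hdim : finrank K E + 1 = finrank K C) : E ⋖ C := by
  refine ⟨hEC.lt_of_ne fun h ↦ by subst h; omega, fun D hED hDC ↦ ?_⟩
  have := Submodule.finrank_lt_finrank_of_lt hED
  have := Submodule.finrank_lt_finrank_of_lt hDC
  omega

end Submodule

section CommRing

variable {R M : Type*} [CommRing R] [AddCommGroup M] [Module R M] {B : BilinForm R M}
  {C D E : Submodule R M} {x y : M}

lemma orthogonal_span_singleton_sup (B : BilinForm R M) (x : M) (E : Submodule R M) :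
    B.orthogonal (Submodule.span R {x} ⊔ E) = B.orthogonal E ⊓ LinearMap.ker (B x) := by
  ext v
  refine ⟨fun hv ↦ ⟨BilinForm.orthogonal_le le_sup_right hv, hv x ?_⟩, fun ⟨hv, hxv⟩ w hw ↦ ?_⟩
  · exact Submodule.mem_sup_left (Submodule.mem_span_singleton_self x)
  · have hle : Submodule.span R {x} ⊔ E ≤ LinearMap.ker (B.flip v) :=
      sup_le ((Submodule.span_singleton_le_iff_mem _ _).2 hxv) hv
    exact hle hw

/-- A submodule equal to its own orthogonal complement with respect to `B`. For the dot product
on `Fin N → F` these are the self-dual codes; see `dualCode_id_eq_orthogonal`. -/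
def IsSelfDual (B : BilinForm R M) (C : Submodule R M) : Prop :=
  C = B.orthogonal C

namespace IsSelfDual

lemma apply_eq_zero (hC : IsSelfDual B C) (hx : x ∈ C) (hy : y ∈ C) : B x y = 0 :=
  hC.le hy x hx

lemma le_orthogonal (hC : IsSelfDual B C) (hEC : E ≤ C) : C ≤ B.orthogonal E :=
  hC.le.trans (BilinForm.orthogonal_le hEC)

lemma eq_of_le (hC : IsSelfDual B C) (hD : IsSelfDual B D) (hCD : C ≤ D) : C = D :=
  hCD.antisymm ((hD.le_orthogonal hCD).trans hC.ge)

lemma inf_eq_of_covBy (hC : IsSelfDual B C) (hD : IsSelfDual B D) (hEC : E ⋖ C) (hED : E ≤ D)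
    (hDC : D ≠ C) : C ⊓ D = E :=
  (hEC.eq_or_eq (le_inf hEC.le hED) inf_le_left).resolve_right fun h ↦
    hDC (hC.eq_of_le hD (inf_eq_left.1 h)).symm

lemma inf_ker_eq_of_covBy (hB : B.IsRefl) (hC : IsSelfDual B C) (hEC : E ⋖ C)
    (hyE : y ∈ B.orthogonal E) (hyC : y ∉ C) : C ⊓ LinearMap.ker (B y) = E := by
  have hEy : E ≤ LinearMap.ker (B y) := fun e he ↦ hB _ _ (hyE e he)
  refine (hEC.eq_or_eq (le_inf hEC.le hEy) inf_le_left).resolve_right fun h ↦ hyC (hC.ge ?_)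
  exact fun c hc ↦ hB _ _ (inf_eq_left.1 h hc)

end IsSelfDual

end CommRing

section Field

variable {K V : Type*} [Field K] [AddCommGroup V] [Module K V] {B : BilinForm K V}
  {C D D' E : Submodule K V} {c v x y : V}

lemma mem_orthogonal_iff_of_wcovBy (hEC : E ⩿ C) (hcC : c ∈ C) (hcE : c ∉ E) :
    v ∈ B.orthogonal C ↔ v ∈ B.orthogonal E ∧ B c v = 0 := by
  rw [← span_singleton_sup_eq_of_wcovBy hEC hcC hcE, orthogonal_span_singleton_sup,
    Submodule.mem_inf, LinearMap.mem_ker]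

lemma orthogonal_wcovBy_orthogonal (hEC : E ⋖ C) : B.orthogonal C ⩿ B.orthogonal E := by
  obtain ⟨c, hcC, hcE⟩ := SetLike.exists_of_lt hEC.lt
  refine ⟨BilinForm.orthogonal_le hEC.le, fun W hCW hWE ↦ hWE.not_ge fun v hv ↦ ?_⟩
  obtain ⟨w, hwW, hwC⟩ := SetLike.exists_of_lt hCW
  have hcw : B c w ≠ 0 := fun h ↦
    hwC ((mem_orthogonal_iff_of_wcovBy hEC.wcovBy hcC hcE).2 ⟨hWE.le hwW, h⟩)
  have hproj : v - (B c v / B c w) • w ∈ B.orthogonal C :=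
    (mem_orthogonal_iff_of_wcovBy hEC.wcovBy hcC hcE).2
      ⟨sub_mem hv (Submodule.smul_mem _ _ (hWE.le hwW)), by simp [hcw]⟩
  exact (W.sub_mem_iff_left (W.smul_mem _ hwW)).1 (hCW.le hproj)

lemma exists_isotropic_add_smul (h2 : (2 : K) ≠ 0) (hB : B.IsSymm) (hc : B c c = 0)
    (hcx : B c x ≠ 0) : ∃ t : K, B (x + t • c) (x + t • c) = 0 := by
  refine ⟨-B x x / (2 * B c x), ?_⟩
  simp only [map_add, map_smul, LinearMap.add_apply, LinearMap.smul_apply, smul_eq_mul, hc,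
    hB.eq x c]
  field_simp
  ring

namespace IsSelfDual

lemma two_mul_finrank [FiniteDimensional K V] (hB : B.Nondegenerate) (hC : IsSelfDual B C) :
    2 * finrank K C = finrank K V := by
  have h := BilinForm.finrank_orthogonal hB C
  rw [← hC] at h
  have := C.finrank_le
  omega

lemma covBy_of_two_mul_finrank_add_one_eq [FiniteDimensional K V] (hB : B.Nondegenerate)
    (hC : IsSelfDual B C) (hEC : E ≤ C) (hdim : 2 * (finrank K E + 1) = finrank K V) : E ⋖ C := by
  have := hC.two_mul_finrank hB
  exact covBy_of_finrank_add_one_eq hEC (by omega)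

lemma wcovBy_orthogonal (hC : IsSelfDual B C) (hEC : E ⋖ C) : C ⩿ B.orthogonal E := by
  have h := orthogonal_wcovBy_orthogonal (B := B) hEC
  rwa [← hC] at h

lemma mem_of_apply_eq_zero (hC : IsSelfDual B C) (hEC : E ⋖ C) (hcC : c ∈ C) (hcE : c ∉ E)
    (hv : v ∈ B.orthogonal E) (hcv : B c v = 0) : v ∈ C :=
  hC.ge ((mem_orthogonal_iff_of_wcovBy hEC.wcovBy hcC hcE).2 ⟨hv, hcv⟩)

lemma sup_eq_orthogonal_of_covBy (hC : IsSelfDual B C) (hD : IsSelfDual B D) (hEC : E ⋖ C)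
    (hED : E ≤ D) (hDC : D ≠ C) : C ⊔ D = B.orthogonal E :=
  ((hC.wcovBy_orthogonal hEC).eq_or_eq le_sup_left
    (sup_le (hC.le_orthogonal hEC.le) (hD.le_orthogonal hED))).resolve_left fun h ↦
      hDC (hD.eq_of_le hC (sup_eq_left.1 h))

lemma span_singleton_sup (hB : B.IsRefl) (hC : IsSelfDual B C) (hEC : E ⋖ C)
    (hyE : y ∈ B.orthogonal E) (hyC : y ∉ C) (hy : B y y = 0) :
    IsSelfDual B (Submodule.span K {y} ⊔ E) := by
  have hyker : Submodule.span K {y} ≤ LinearMap.ker (B y) := by simpa using hy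
  calc Submodule.span K {y} ⊔ E
      = Submodule.span K {y} ⊔ C ⊓ LinearMap.ker (B y) := by
        rw [hC.inf_ker_eq_of_covBy hB hEC hyE hyC]
    _ = (Submodule.span K {y} ⊔ C) ⊓ LinearMap.ker (B y) := (sup_inf_assoc_of_le C hyker).symm
    _ = B.orthogonal E ⊓ LinearMap.ker (B y) := by
        rw [span_singleton_sup_eq_of_wcovBy (hC.wcovBy_orthogonal hEC) hyE hyC]
    _ = B.orthogonal (Submodule.span K {y} ⊔ E) := (orthogonal_span_singleton_sup B y E).symm

lemma exists_ne_of_covBy (h2 : (2 : K) ≠ 0) (hB : B.IsSymm) (hC : IsSelfDual B C) (hEC : E ⋖ C)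
    (hE : B.orthogonal (B.orthogonal E) = E) : ∃ D, IsSelfDual B D ∧ E ≤ D ∧ D ≠ C := by
  obtain ⟨c, hcC, hcE⟩ := SetLike.exists_of_lt hEC.lt
  have hnle : ¬ B.orthogonal E ≤ C := fun h ↦ hEC.lt.not_ge (hE ▸ hC.le_orthogonal h)
  obtain ⟨x, hxE, hxC⟩ := SetLike.not_le_iff_exists.1 hnle
  have hcx : B c x ≠ 0 := fun h ↦ hxC (hC.mem_of_apply_eq_zero hEC hcC hcE hxE h)
  obtain ⟨t, ht⟩ := exists_isotropic_add_smul h2 hB (hC.apply_eq_zero hcC hcC) hcx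
  have htcC : t • c ∈ C := C.smul_mem t hcC
  have hyE : x + t • c ∈ B.orthogonal E := add_mem hxE (hC.le_orthogonal hEC.le htcC)
  have hyC : x + t • c ∉ C := fun h ↦ hxC ((C.add_mem_iff_left htcC).1 h)
  refine ⟨_, hC.span_singleton_sup hB.isRefl hEC hyE hyC ht, le_sup_right, fun h ↦ hyC ?_⟩
  exact h.le (Submodule.mem_sup_left (Submodule.mem_span_singleton_self _))

lemma le_of_ne_of_ne (h2 : (2 : K) ≠ 0) (hB : B.IsSymm) (hC : IsSelfDual B C) (hEC : E ⋖ C)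
    (hD : IsSelfDual B D) (hED : E ≤ D) (hDC : D ≠ C)
    (hD' : IsSelfDual B D') (hED' : E ≤ D') (hDC' : D' ≠ C) : D ≤ D' := by
  intro y hyD
  have hy : y ∈ C ⊔ D' := by
    rw [hC.sup_eq_orthogonal_of_covBy hD' hEC hED' hDC']
    exact hD.le_orthogonal hED hyD
  obtain ⟨c, hcC, d, hdD', rfl⟩ := Submodule.mem_sup.1 hy
  have hcd : B c d = 0 := by
    have h := hD.apply_eq_zero hyD hyD
    simp only [map_add, LinearMap.add_apply, hC.apply_eq_zero hcC hcC,
      hD'.apply_eq_zero hdD' hdD', hB.eq d c, zero_add, add_zero, ← two_mul] at h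
    exact (mul_eq_zero.1 h).resolve_left h2
  by_cases hcE : c ∈ E
  · exact add_mem (hED' hcE) hdD'
  · have hdC : d ∈ C :=
      hC.mem_of_apply_eq_zero hEC hcC hcE (hD'.le_orthogonal hED' hdD') hcd
    have hyE : c + d ∈ E := by
      rw [← hC.inf_eq_of_covBy hD hEC hED hDC]
      exact ⟨add_mem hcC hdC, hyD⟩
    exact hED' hyE

end IsSelfDual

end Field

section DotProduct

variable {n R : Type*} [Fintype n]

lemma dotProductBilin_isSymm [CommSemiring R] :
    BilinForm.IsSymm (dotProductBilin R R : BilinForm R (n → R)) :=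
  ⟨dotProduct_comm⟩

lemma dotProductBilin_nondegenerate [CommSemiring R] :
    BilinForm.Nondegenerate (dotProductBilin R R : BilinForm R (n → R)) :=
  ⟨dotProduct_eq_zero, fun v h ↦ dotProduct_eq_zero v fun w ↦ dotProduct_comm v w ▸ h w⟩

lemma dualCode_id_eq_orthogonal {F : Type} [Field F] {N : ℕ} (C : Submodule F (Fin N → F)) :
    dualCode id C = BilinForm.orthogonal (dotProductBilin F F) C := by
  ext v
  exact forall₂_congr fun c _ ↦ by rw [← dotProductBilin_isSymm.eq]; rfl

end DotProduct

lemma two_ne_zero_of_odd_card {F : Type*} [Field F] [Fintype F] (hq : Odd (Fintype.card F)) :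
    (2 : F) ≠ 0 :=
  Ring.two_ne_zero fun h ↦
    Nat.not_even_iff_odd.2 hq (Nat.even_iff.2 (FiniteField.even_card_of_char_two h))

end KneserHeckeCodes

theorem selfDual_count_above_qE_general {K V : Type*} [Field K] [AddCommGroup V] [Module K V]
    (h2 : (2 : K) ≠ 0) {B : LinearMap.BilinForm K V} (hB : B.IsSymm) {C E : Submodule K V}
    (hC : IsSelfDual B C) (hEC : E ⋖ C) (hE : B.orthogonal (B.orthogonal E) = E) :
    Nat.card {D : Submodule K V // IsSelfDual B D ∧ E ≤ D} = 2 := by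
  obtain ⟨D, hD, hED, hDC⟩ := hC.exists_ne_of_covBy h2 hB hEC hE
  refine (Nat.card_eq_two_iff' ⟨C, hC, hEC.le⟩).2
    ⟨⟨D, hD, hED⟩, fun h ↦ hDC (congrArg Subtype.val h), ?_⟩
  rintro ⟨D', hD', hED'⟩ hne
  have hDC' : D' ≠ C := fun h ↦ hne (Subtype.ext h)
  exact Subtype.ext <|
    hD'.eq_of_le hD <| hC.le_of_ne_of_ne h2 hB hEC hD' hED' hDC' hD hED hDC

/-- For `q` odd, a self-dual code `C ≤ F_q^{2n}` and a subspace `E ≤ C` of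
dimension `n-1`, there are exactly `2` self-dual codes `D` with `E ≤ D`. -/
theorem selfDual_count_above_qE
    {F : Type} [Field F] [Fintype F] (hq : Odd (Fintype.card F)) {n : ℕ}
    (C : Submodule F (Fin (2 * n) → F)) (hC : C = dualCode (id : F → F) C)
    (E : Submodule F (Fin (2 * n) → F)) (hE : E ≤ C)
    (hdim : Module.finrank F ↥E + 1 = n) :
    Nat.card {D : Submodule F (Fin (2 * n) → F) //
        D = dualCode (id : F → F) D ∧ E ≤ D} = 2 := by
  simp only [dualCode_id_eq_orthogonal] at hC ⊢
  exact selfDual_count_above_qE_general (two_ne_zero_of_odd_card hq) dotProductBilin_isSymm hC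
    (IsSelfDual.covBy_of_two_mul_finrank_add_one_eq dotProductBilin_nondegenerate hC hE
      (by rw [hdim, Module.finrank_fin_fun]))
    (LinearMap.BilinForm.orthogonal_orthogonal dotProductBilin_nondegenerate
      dotProductBilin_isSymm.isRefl E)
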